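/- Let n ≥ 1, r ≥ 1, let p₁, …, p_r be non-negative integers with p = p₁ + ⋯ + p_r, and let τ be a partition of {1, …, 2p} into pairs. Then there exist finitely many words w₁, …, w_c ∈ FreeGroup(Fin r) such that for all g₁, …, g_r ∈ O(n), tr((g₁^{⊗p₁} ⊗ ⋯ ⊗ g_r^{⊗p_r}) ∘ J_τ) = ∏_{j=1}^c tr(w_j(g)), where w_j(g) is the image of w_j under the homomorphism FreeGroup(Fin r) → O(n) sending the i-th generator to g_i. In particular, the spin network ψ_{α,J_τ} associated to the representations α_i = V^{⊗p_i} of O(n) is a product of Wilson loops. -/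

import Mathlib

open scoped TensorProduct

/-- The operator `J_τ` on `(ℂ^n)^{⊗p}` associated to a partition `τ` of `{1, …, 2p}`
into pairs (encoded as a fixed-point-free involution). Under the identification of
`End((ℂ^n)^{⊗p})` with `(ℂ^n)^{⊗2p}` given by the standard bilinear form `⟨·,·⟩`
(in which `v₁ ⊗ ⋯ ⊗ v_{2p}` sends `w₁ ⊗ ⋯ ⊗ w_p` to
`(∏ i, ⟨v_i, w_i⟩) · v_{p+1} ⊗ ⋯ ⊗ v_{2p}`), it corresponds to
`∑_{i : Fin 2p → Fin n} (∏_{{k,l} ∈ τ} ⟨e_{i k}, e_{i l}⟩) · e_{i 1} ⊗ ⋯ ⊗ e_{i 2p}`. -/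
noncomputable def pairingMap (n d : ℕ) (τ : Equiv.Perm (Fin (2 * d))) :
    (⨂[ℂ] _ : Fin d, (Fin n → ℂ)) →ₗ[ℂ] ⨂[ℂ] _ : Fin d, (Fin n → ℂ) :=
  ∑ i : Fin (2 * d) → Fin n,
    (∏ k ∈ Finset.univ.filter fun k : Fin (2 * d) => k < τ k,
        (if i k = i (τ k) then (1 : ℂ) else 0)) •
      LinearMap.smulRight
        (PiTensorProduct.lift
          ((MultilinearMap.mkPiAlgebra ℂ (Fin d) ℂ).compLinearMap fun j =>
            LinearMap.proj (i (⟨(j : ℕ), by have := j.isLt; omega⟩ : Fin (2 * d)))))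
        (PiTensorProduct.tprod ℂ fun j : Fin d =>
          Pi.single (i (⟨d + (j : ℕ), by have := j.isLt; omega⟩ : Fin (2 * d))) (1 : ℂ))

/-- For `a ∈ {1, …, p₁ + ⋯ + p_r}`, the index `i` of the block `p₁ + ⋯ + p_{i-1} < a ≤
p₁ + ⋯ + p_i` containing `a`. -/
noncomputable def blockIndex {r : ℕ} (p : Fin r → ℕ) (a : Fin (∑ i, p i)) : Fin r :=
  (Finset.univ.filter fun i : Fin r => (a : ℕ) < ∑ k ∈ Finset.Iic i, p k).min'
    (by
      have ha := a.isLt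
      cases r with
      | zero => simp at ha
      | succ r' =>
        refine ⟨Fin.last r', Finset.mem_filter.mpr ⟨Finset.mem_univ _, ?_⟩⟩
        have huniv : Finset.Iic (Fin.last r') = Finset.univ := by
          ext x; simp [Fin.le_last]
        rw [huniv]
        exact ha)

/-!
Expanding in coordinates, the trace is a sum over the colourings of `{1, …, 2p}` that are constant
on the pairs of `τ`. It is therefore the contraction of a graph whose vertices are the pairs and
whose arcs are the tensor factors, labelled by group elements. Every vertex meets exactly two arc
ends, and vertices can be removed one at a time: a loop contributes the trace of its label, while
two distinct arcs at a vertex merge into one by matrix multiplication, after a reversal `g ↦ g⁻¹`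
where needed, since `g⁻¹ = gᵀ`. The cycles of the graph thus become Wilson loops.
-/

/-- An arc of a directed multigraph on the vertex type `V`, labelled by an element of `G`. A
multigraph is encoded as the multiset of its arcs. -/
structure LabelledArc (V G : Type*) where
  source : V
  target : V
  label : G

namespace LabelledArc

variable {V W G κ R : Type*}

/-- The image of an arc under a map of vertices. -/
def map (f : V → W) (e : LabelledArc V G) : LabelledArc W G :=
  ⟨f e.source, f e.target, e.label⟩

section Endpoints

/-- The endpoints of the arcs of a multigraph, each vertex being repeated as often as its degree. -/
def endpoints (E : Multiset (LabelledArc V G)) : Multiset V :=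
  E.map source + E.map target

@[simp]
theorem endpoints_cons (e : LabelledArc V G) (E : Multiset (LabelledArc V G)) :
    endpoints (e ::ₘ E) = e.source ::ₘ e.target ::ₘ endpoints E := by
  simp only [endpoints, Multiset.map_cons, Multiset.cons_add, Multiset.add_cons,
    Multiset.cons_swap e.target]

theorem endpoints_map (f : V → W) (E : Multiset (LabelledArc V G)) :
    endpoints (E.map (map f)) = (endpoints E).map f := by
  simp only [endpoints, Multiset.map_add, Multiset.map_map]
  rfl

theorem exists_eq_cons_of_mem_endpoints {E : Multiset (LabelledArc V G)} {v : V}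
    (hv : v ∈ endpoints E) :
    ∃ (b : V) (w : G) (F : Multiset (LabelledArc V G)),
      E = ⟨b, v, w⟩ ::ₘ F ∨ E = ⟨v, b, w⟩ ::ₘ F := by
  obtain hv | hv := Multiset.mem_add.1 hv <;>
    obtain ⟨⟨a, b, w⟩, he, rfl⟩ := Multiset.mem_map.1 hv <;>
    obtain ⟨F, rfl⟩ := Multiset.exists_cons_of_mem he
  · exact ⟨b, w, F, Or.inr rfl⟩
  · exact ⟨a, w, F, Or.inl rfl⟩

theorem exists_eq_map_of_endpoints_eq_map {f : V → W} (hf : f.Injective)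
    {E : Multiset (LabelledArc W G)} {S : Multiset V} (h : endpoints E = S.map f) :
    ∃ F : Multiset (LabelledArc V G), E = F.map (map f) ∧ endpoints F = S := by
  have hrange : ∀ e ∈ E, e ∈ Set.range (map f) := by
    intro e he
    have hsource : e.source ∈ S.map f :=
      h ▸ Multiset.mem_add.2 (Or.inl (Multiset.mem_map_of_mem source he))
    have htarget : e.target ∈ S.map f :=
      h ▸ Multiset.mem_add.2 (Or.inr (Multiset.mem_map_of_mem target he))
    obtain ⟨a, -, ha⟩ := Multiset.mem_map.1 hsource
    obtain ⟨b, -, hb⟩ := Multiset.mem_map.1 htarget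
    exact ⟨⟨a, b, e.label⟩, by rw [map, ha, hb]⟩
  have : CanLift (LabelledArc W G) (LabelledArc V G) (map f) (· ∈ Set.range (map f)) :=
    ⟨fun _ => id⟩
  lift E to Multiset (LabelledArc V G) using hrange with F
  exact ⟨F, rfl, Multiset.map_injective hf ((endpoints_map f F).symm.trans h)⟩

theorem endpoints_map_univ {J : Type*} [Fintype J] (s t : J → V) (β : J → G) :
    endpoints (Finset.univ.val.map fun j => (⟨s j, t j, β j⟩ : LabelledArc V G)) =
      Finset.univ.val.map (Sum.elim s t) := by
  have huniv : (Finset.univ.val : Multiset (J ⊕ J)) =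
      Finset.univ.val.map Sum.inl + Finset.univ.val.map Sum.inr := rfl
  simp only [endpoints, huniv, Multiset.map_add, Multiset.map_map, Function.comp_def, Sum.elim_inl,
    Sum.elim_inr]

/-- A multigraph is two-regular if every vertex has degree two. -/
def IsTwoRegular [Fintype V] (E : Multiset (LabelledArc V G)) : Prop :=
  endpoints E = 2 • Finset.univ.val

theorem isTwoRegular_map_equiv [Fintype V] [Fintype W] (f : V ≃ W)
    {E : Multiset (LabelledArc V G)} :
    IsTwoRegular (E.map (map f)) ↔ IsTwoRegular E := by
  have huniv : (Finset.univ.val : Multiset W) = Finset.univ.val.map f := by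
    rw [← Finset.map_univ_equiv f]
    rfl
  rw [IsTwoRegular, IsTwoRegular, endpoints_map, huniv, ← Multiset.map_nsmul,
    (Multiset.map_injective f.injective).eq_iff]

theorem isTwoRegular_option_iff [Fintype V] {E : Multiset (LabelledArc (Option V) G)} :
    IsTwoRegular E ↔
      endpoints E = none ::ₘ none ::ₘ (2 • Finset.univ.val : Multiset V).map some := by
  have huniv : (Finset.univ.val : Multiset (Option V)) = none ::ₘ Finset.univ.val.map some := rfl
  rw [IsTwoRegular, huniv, two_nsmul, two_nsmul, Multiset.map_add, Multiset.cons_add,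
    Multiset.add_cons]

theorem isTwoRegular_reverse_cons [Fintype V] {a b : V} {w w' : G}
    {E : Multiset (LabelledArc V G)} :
    IsTwoRegular (⟨b, a, w'⟩ ::ₘ E) ↔ IsTwoRegular (⟨a, b, w⟩ ::ₘ E) := by
  rw [IsTwoRegular, IsTwoRegular, endpoints_cons, endpoints_cons, Multiset.cons_swap]

theorem IsTwoRegular.exists_of_loop [Fintype V] {w : G} {E : Multiset (LabelledArc (Option V) G)}
    (hE : IsTwoRegular (⟨none, none, w⟩ ::ₘ E)) :
    ∃ F : Multiset (LabelledArc V G), E = F.map (map some) ∧ IsTwoRegular F := by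
  rw [isTwoRegular_option_iff, endpoints_cons, Multiset.cons_inj_right,
    Multiset.cons_inj_right] at hE
  exact exists_eq_map_of_endpoints_eq_map (Option.some_injective V) hE

theorem IsTwoRegular.exists_of_path [Fintype V] {a : V} {b : Option V} {w w' : G}
    {E : Multiset (LabelledArc (Option V) G)}
    (hE : IsTwoRegular (⟨some a, none, w⟩ ::ₘ ⟨none, b, w'⟩ ::ₘ E)) (w'' : G) :
    ∃ (c : V) (F : Multiset (LabelledArc V G)),
      b = some c ∧ E = F.map (map some) ∧ IsTwoRegular (⟨a, c, w''⟩ ::ₘ F) := by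
  classical
  have hends : (2 • Finset.univ.val : Multiset V).map some = some a ::ₘ b ::ₘ endpoints E := by
    rw [isTwoRegular_option_iff, endpoints_cons, endpoints_cons, Multiset.cons_swap (some a),
      Multiset.cons_inj_right, Multiset.cons_swap (some a), Multiset.cons_inj_right] at hE
    exact hE.symm
  obtain ⟨a, ha, ⟨⟩, hends⟩ := (Multiset.map_eq_cons _ _ _ _).2 hends
  obtain ⟨c, hc, rfl, hrest⟩ := (Multiset.map_eq_cons _ _ _ _).2 hends
  obtain ⟨F, rfl, hF⟩ :=
    exists_eq_map_of_endpoints_eq_map (Option.some_injective V) hrest.symm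
  refine ⟨c, F, rfl, rfl, ?_⟩
  rw [IsTwoRegular, endpoints_cons, hF, Multiset.cons_erase hc, Multiset.cons_erase ha]

end Endpoints

section Contraction

variable [CommRing R] [Group G] [Fintype κ] [DecidableEq κ]

/-- The entry of the orthogonal matrix labelling an arc that is selected by a colouring of the
vertices. -/
def weight (ρ : G →* Matrix.orthogonalGroup κ R) (c : V → κ) (e : LabelledArc V G) : R :=
  (ρ e.label : Matrix κ κ R) (c e.source) (c e.target)

theorem weight_reverse (ρ : G →* Matrix.orthogonalGroup κ R) (c : V → κ) (a b : V) (w : G) :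
    weight ρ c ⟨b, a, w⁻¹⟩ = weight ρ c ⟨a, b, w⟩ := by
  simp only [weight, map_inv]
  rfl

theorem map_weight_map_some (ρ : G →* Matrix.orthogonalGroup κ R) (x : κ) (c : V → κ)
    (F : Multiset (LabelledArc V G)) :
    (F.map (map some)).map (weight ρ fun v => v.elim x c) = F.map (weight ρ c) := by
  rw [Multiset.map_map]
  rfl

variable [Fintype V] [DecidableEq V]

/-- The contraction of the tensor network in which every arc of a multigraph carries an orthogonal
matrix: the sum over all colourings of the vertices of the product of the selected entries. -/
def contraction (ρ : G →* Matrix.orthogonalGroup κ R) (E : Multiset (LabelledArc V G)) : R :=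
  ∑ c : V → κ, (E.map (weight ρ c)).prod

theorem contraction_reverse_cons (ρ : G →* Matrix.orthogonalGroup κ R) (a b : V) (w : G)
    (E : Multiset (LabelledArc V G)) :
    contraction ρ (⟨b, a, w⁻¹⟩ ::ₘ E) = contraction ρ (⟨a, b, w⟩ ::ₘ E) := by
  simp only [contraction, Multiset.map_cons, weight_reverse]

theorem contraction_map_equiv [Fintype W] [DecidableEq W]
    (ρ : G →* Matrix.orthogonalGroup κ R) (f : V ≃ W) (E : Multiset (LabelledArc V G)) :
    contraction ρ (E.map (map f)) = contraction ρ E := by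
  refine Fintype.sum_equiv (f.arrowCongr (Equiv.refl κ)).symm _ _ fun c => ?_
  rw [Multiset.map_map]
  rfl

theorem contraction_option (ρ : G →* Matrix.orthogonalGroup κ R)
    (E : Multiset (LabelledArc (Option V) G)) :
    contraction ρ E =
      ∑ c : V → κ, ∑ x : κ, (E.map (weight ρ fun v => v.elim x c)).prod := by
  rw [Finset.sum_comm, ← Fintype.sum_prod_type', contraction]
  refine Fintype.sum_equiv (Equiv.piOptionEquivProd (β := fun _ => κ)) _ _ fun c => ?_
  have hc : (fun v => Option.elim v (c none) fun v => c (some v)) = c := by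
    funext v
    cases v <;> rfl
  exact congrArg (fun c => (E.map (weight ρ c)).prod) hc.symm

theorem contraction_loop (ρ : G →* Matrix.orthogonalGroup κ R) (w : G)
    (F : Multiset (LabelledArc V G)) :
    contraction ρ (⟨none, none, w⟩ ::ₘ F.map (map some)) =
      (ρ w : Matrix κ κ R).trace * contraction ρ F := by
  rw [contraction_option, contraction, Finset.mul_sum]
  refine Finset.sum_congr rfl fun c _ => ?_
  simp only [Multiset.map_cons, Multiset.prod_cons, map_weight_map_some, ← Finset.sum_mul]
  rfl

theorem contraction_path (ρ : G →* Matrix.orthogonalGroup κ R) (a b : V) (w w' : G)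
    (F : Multiset (LabelledArc V G)) :
    contraction ρ
        (⟨some a, none, w⟩ ::ₘ ⟨none, some b, w'⟩ ::ₘ F.map (map some)) =
      contraction ρ (⟨a, b, w * w'⟩ ::ₘ F) := by
  rw [contraction_option, contraction]
  refine Finset.sum_congr rfl fun c _ => ?_
  simp only [Multiset.map_cons, Multiset.prod_cons, map_weight_map_some, ← mul_assoc,
    ← Finset.sum_mul]
  simp only [weight, map_mul, Matrix.UnitaryGroup.mul_val, Matrix.mul_apply, Option.elim]

end Contraction

section Loops

variable (R) [CommRing R] [Group G]

/-- The contraction of the multigraph `E` is a product of Wilson loops, with words that depend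
neither on the dimension nor on the orthogonal representation of `G`. -/
def IsProductOfLoops [Fintype V] [DecidableEq V] (E : Multiset (LabelledArc V G)) : Prop :=
  ∃ L : List G, ∀ (n : ℕ) (ρ : G →* Matrix.orthogonalGroup (Fin n) R),
    contraction ρ E = (L.map fun w => (ρ w : Matrix (Fin n) (Fin n) R).trace).prod

variable {R}

theorem IsProductOfLoops.of_contraction_eq [Fintype V] [DecidableEq V] [Fintype W] [DecidableEq W]
    {E : Multiset (LabelledArc V G)} {F : Multiset (LabelledArc W G)} (hF : IsProductOfLoops R F)
    (h : ∀ (n : ℕ) (ρ : G →* Matrix.orthogonalGroup (Fin n) R),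
      contraction ρ E = contraction ρ F) :
    IsProductOfLoops R E := by
  obtain ⟨L, hL⟩ := hF
  exact ⟨L, fun n ρ => (h n ρ).trans (hL n ρ)⟩

variable [Fintype V] [DecidableEq V]

theorem IsProductOfLoops.loop {F : Multiset (LabelledArc V G)} (hF : IsProductOfLoops R F)
    (w : G) : IsProductOfLoops R (⟨none, none, w⟩ ::ₘ F.map (map some)) := by
  obtain ⟨L, hL⟩ := hF
  exact ⟨w :: L, fun n ρ => by rw [contraction_loop, hL, List.map_cons, List.prod_cons]⟩

theorem IsProductOfLoops.of_reverse_cons {a b : V} {w : G} {E : Multiset (LabelledArc V G)}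
    (h : IsProductOfLoops R (⟨b, a, w⁻¹⟩ ::ₘ E)) : IsProductOfLoops R (⟨a, b, w⟩ ::ₘ E) :=
  h.of_contraction_eq fun _ ρ => (contraction_reverse_cons ρ a b w E).symm

theorem isProductOfLoops_path
    (hV : ∀ F : Multiset (LabelledArc V G), IsTwoRegular F → IsProductOfLoops R F)
    {a : V} {b : Option V} {w w' : G} {E : Multiset (LabelledArc (Option V) G)}
    (hE : IsTwoRegular (⟨some a, none, w⟩ ::ₘ ⟨none, b, w'⟩ ::ₘ E)) :
    IsProductOfLoops R (⟨some a, none, w⟩ ::ₘ ⟨none, b, w'⟩ ::ₘ E) := by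
  obtain ⟨c, F, rfl, rfl, hF⟩ := hE.exists_of_path (w * w')
  exact (hV _ hF).of_contraction_eq fun _ ρ => contraction_path ρ a c w w' F

theorem isProductOfLoops_incoming
    (hV : ∀ F : Multiset (LabelledArc V G), IsTwoRegular F → IsProductOfLoops R F)
    {a : Option V} {w : G} {E : Multiset (LabelledArc (Option V) G)}
    (hE : IsTwoRegular (⟨a, none, w⟩ ::ₘ E)) : IsProductOfLoops R (⟨a, none, w⟩ ::ₘ E) := by
  cases a with
  | none =>
    obtain ⟨F, rfl, hF⟩ := hE.exists_of_loop
    exact (hV F hF).loop w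
  | some a =>
    have hnone : none ∈ endpoints E := by
      rw [isTwoRegular_option_iff, endpoints_cons, Multiset.cons_swap,
        Multiset.cons_inj_right] at hE
      have hmem : none ∈ some a ::ₘ endpoints E := hE ▸ Multiset.mem_cons_self _ _
      simpa using hmem
    obtain ⟨b, w', F, rfl | rfl⟩ := exists_eq_cons_of_mem_endpoints hnone
    · rw [Multiset.cons_swap] at hE ⊢
      rw [← isTwoRegular_reverse_cons (w' := w'⁻¹), Multiset.cons_swap] at hE
      refine IsProductOfLoops.of_reverse_cons ?_
      rw [Multiset.cons_swap]
      exact isProductOfLoops_path hV hE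
    · exact isProductOfLoops_path hV hE

theorem isProductOfLoops_option
    (hV : ∀ F : Multiset (LabelledArc V G), IsTwoRegular F → IsProductOfLoops R F)
    {E : Multiset (LabelledArc (Option V) G)} (hE : IsTwoRegular E) : IsProductOfLoops R E := by
  have hnone : none ∈ endpoints E := by
    rw [isTwoRegular_option_iff.1 hE]
    exact Multiset.mem_cons_self _ _
  obtain ⟨b, w, F, rfl | rfl⟩ := exists_eq_cons_of_mem_endpoints hnone
  · exact isProductOfLoops_incoming hV hE
  · exact (isProductOfLoops_incoming hV (isTwoRegular_reverse_cons.1 hE)).of_reverse_cons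

theorem isProductOfLoops_empty [IsEmpty V] (E : Multiset (LabelledArc V G)) :
    IsProductOfLoops R E := by
  obtain rfl : E = 0 := Multiset.eq_zero_of_forall_notMem fun e => isEmptyElim e.source
  exact ⟨[], fun n ρ => by simp [contraction]⟩

theorem IsTwoRegular.isProductOfLoops {E : Multiset (LabelledArc V G)} (hE : IsTwoRegular E) :
    IsProductOfLoops R E := by
  refine Fintype.induction_empty_option
    (P := fun V _ => ∀ [DecidableEq V] (E : Multiset (LabelledArc V G)),
      IsTwoRegular E → IsProductOfLoops R E) ?_ ?_ ?_ V E hE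
  · intro V W _ f hV _ E hE
    classical
    let _ := Fintype.ofEquiv W f.symm
    exact (hV _ ((isTwoRegular_map_equiv f.symm).2 hE)).of_contraction_eq
      fun _ ρ => (contraction_map_equiv ρ f.symm E).symm
  · intro _ E _
    exact isProductOfLoops_empty E
  · intro V _ hV _ E hE
    classical
    convert isProductOfLoops_option (fun F => hV F) hE

end Loops

end LabelledArc

section Pairing

variable {J H V G κ R : Type*} [Fintype H] [Fintype V] {τ : H → H} {π : H → V}

theorem map_univ_eq_two_nsmul_univ (hπ : π.Surjective)
    (hker : ∀ x y, π x = π y ↔ x = y ∨ x = τ y) (hfpf : ∀ x, τ x ≠ x) :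
    (Finset.univ.val : Multiset H).map π = 2 • Finset.univ.val := by
  classical
  ext v
  obtain ⟨y, rfl⟩ := hπ v
  have hfibre : (Finset.univ.filter fun x => π y = π x) = {y, τ y} := by
    ext x
    rw [Finset.mem_filter_univ, eq_comm, hker, Finset.mem_insert, Finset.mem_singleton]
  rw [Multiset.count_map, ← Finset.filter_val, Finset.card_val, hfibre,
    Finset.card_pair (hfpf y).symm, Multiset.count_nsmul, Multiset.count_univ, mul_one]

theorem sum_filter_invariant [DecidableEq H] [DecidableEq V] [Fintype κ] [DecidableEq κ]
    {M : Type*} [AddCommMonoid M] (hπ : π.Surjective)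
    (hker : ∀ x y, π x = π y ↔ x = y ∨ x = τ y) (F : (H → κ) → M) :
    ∑ i : H → κ with ∀ x, i (τ x) = i x, F i = ∑ c : V → κ, F (c ∘ π) := by
  symm
  refine Finset.sum_nbij (· ∘ π) ?_ hπ.injective_comp_right.injOn ?_ fun _ _ => rfl
  · intro c _
    exact Finset.mem_filter_univ _ |>.2 fun x => congrArg c ((hker _ _).2 (Or.inr rfl))
  · intro i hi
    have hinvariant : ∀ x, i (τ x) = i x := (Finset.mem_filter_univ i).1 hi
    have hfactors : i.FactorsThrough π := by
      intro x y hxy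
      obtain rfl | rfl := (hker x y).1 hxy
      exacts [rfl, hinvariant y]
    exact ⟨i ∘ Function.surjInv hπ, Finset.mem_coe.2 (Finset.mem_univ _),
      funext fun x => hfactors (Function.surjInv_eq hπ (π x))⟩

open LabelledArc in
theorem exists_sum_invariant_eq_prod_trace [CommRing R] [Group G] [Fintype J] [DecidableEq H]
    (e : J ⊕ J ≃ H) (hinv : τ.Involutive) (hfpf : ∀ x, τ x ≠ x) (β : J → G) :
    ∃ L : List G, ∀ (n : ℕ) (ρ : G →* Matrix.orthogonalGroup (Fin n) R),
      ∑ i : H → Fin n with ∀ x, i (τ x) = i x,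
          ∏ j, (ρ (β j) : Matrix (Fin n) (Fin n) R) (i (e (.inl j))) (i (e (.inr j))) =
        (L.map fun w => (ρ w : Matrix (Fin n) (Fin n) R).trace).prod := by
  classical
  let π : H → Set.range fun x => s(x, τ x) := Set.rangeFactorization _
  have hπ : π.Surjective := Set.rangeFactorization_surjective
  have hker : ∀ x y, π x = π y ↔ x = y ∨ x = τ y := by
    intro x y
    have hpair : π x = π y ↔ s(x, τ x) = s(y, τ y) := Subtype.ext_iff
    rw [hpair, Sym2.eq_iff]
    constructor
    · rintro (⟨rfl, -⟩ | ⟨rfl, -⟩)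
      exacts [Or.inl rfl, Or.inr rfl]
    · rintro (rfl | rfl)
      exacts [Or.inl ⟨rfl, rfl⟩, Or.inr ⟨rfl, hinv y⟩]
  have hregular : IsTwoRegular (Finset.univ.val.map fun j =>
      (⟨π (e (.inl j)), π (e (.inr j)), β j⟩ : LabelledArc _ G)) := by
    have hsum : Sum.elim (fun j => π (e (.inl j))) (fun j => π (e (.inr j))) = π ∘ e := by
      ext (j | j) <;> rfl
    have huniv : (Finset.univ.val : Multiset H) = Finset.univ.val.map e := by
      rw [← Finset.map_univ_equiv e]
      rfl
    rw [IsTwoRegular, endpoints_map_univ, hsum, ← Multiset.map_map, ← huniv,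
      map_univ_eq_two_nsmul_univ hπ hker hfpf]
  obtain ⟨L, hL⟩ := hregular.isProductOfLoops (R := R)
  refine ⟨L, fun n ρ => ?_⟩
  rw [sum_filter_invariant hπ hker, ← hL]
  refine Finset.sum_congr rfl fun c _ => ?_
  rw [Multiset.map_map]
  rfl

end Pairing

section Trace

theorem trace_comp_smulRight {R M : Type*} [CommRing R] [AddCommGroup M] [Module R M]
    [Module.Free R M] [Module.Finite R M] (T : M →ₗ[R] M) (f : M →ₗ[R] R) (x : M) :
    LinearMap.trace R M (T ∘ₗ f.smulRight x) = f (T x) := by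
  have hcomp : T ∘ₗ f.smulRight x = f.smulRight (T x) := by
    ext y
    exact map_smul T (f y) x
  rw [hcomp, LinearMap.trace_smulRight]

theorem prod_ite_lt_eq_ite_forall {H κ M : Type*} [Fintype H] [LinearOrder H] [DecidableEq κ]
    [CommMonoidWithZero M] {τ : H → H} (hinv : τ.Involutive) (i : H → κ)
    [Decidable (∀ k, i (τ k) = i k)] :
    (∏ k with k < τ k, if i k = i (τ k) then (1 : M) else 0) =
      if ∀ k, i (τ k) = i k then 1 else 0 := by
  have hiff : (∀ k ∈ Finset.univ.filter (fun k => k < τ k), i k = i (τ k)) ↔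
      ∀ k, i (τ k) = i k := by
    refine ⟨fun h k => ?_, fun h k _ => (h k).symm⟩
    obtain hlt | heq | hgt := lt_trichotomy k (τ k)
    · exact (h k (Finset.mem_filter_univ k |>.2 hlt)).symm
    · rw [← heq]
    · have hτ := h (τ k) (Finset.mem_filter_univ _ |>.2 ((hinv k).symm ▸ hgt))
      rwa [hinv k] at hτ
  simp only [Finset.prod_ite_zero, Finset.prod_const_one, hiff]

/-- The splitting of `{1, …, 2d}` into its first and its second half, that is, into the inputs and
the outputs of an operator on the `d`-fold tensor power. -/
def halvesEquiv (d : ℕ) : Fin d ⊕ Fin d ≃ Fin (2 * d) :=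
  finSumFinEquiv.trans (finCongr (two_mul d).symm)

theorem trace_map_comp_pairingMap {n d : ℕ} {τ : Equiv.Perm (Fin (2 * d))}
    [DecidablePred fun i : Fin (2 * d) → Fin n => ∀ k, i (τ k) = i k]
    (hinv : Function.Involutive τ) (A : Fin d → Matrix (Fin n) (Fin n) ℂ) :
    LinearMap.trace ℂ _ ((PiTensorProduct.map fun a => (A a).mulVecLin) ∘ₗ pairingMap n d τ) =
      ∑ i : Fin (2 * d) → Fin n with ∀ k, i (τ k) = i k,
        ∏ j, A j (i (halvesEquiv d (.inl j))) (i (halvesEquiv d (.inr j))) := by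
  have : Module.Free ℂ (⨂[ℂ] _ : Fin d, (Fin n → ℂ)) := Module.Free.of_divisionRing _ _
  rw [pairingMap, ← Module.End.mul_eq_comp, Finset.mul_sum, map_sum, Finset.sum_filter]
  refine Finset.sum_congr rfl fun i _ => ?_
  rw [Module.End.mul_eq_comp, LinearMap.comp_smul, map_smul, trace_comp_smulRight,
    prod_ite_lt_eq_ite_forall hinv, PiTensorProduct.map_tprod, PiTensorProduct.lift.tprod,
    ite_smul, one_smul, zero_smul]
  simp only [Matrix.mulVecLin_apply, Matrix.mulVec_single_one, MultilinearMap.compLinearMap_apply,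
    MultilinearMap.mkPiAlgebra_apply]
  rfl

end Trace

/-- The homomorphism of orthogonal groups induced by a homomorphism of coefficient rings. -/
def orthogonalGroupMap (κ : Type*) [Fintype κ] [DecidableEq κ] {R S : Type*} [CommRing R]
    [CommRing S] (f : R →+* S) : Matrix.orthogonalGroup κ R →* Matrix.orthogonalGroup κ S where
  toFun A := ⟨(A : Matrix κ κ R).map f, by
    rw [Matrix.mem_orthogonalGroup_iff, ← Matrix.transpose_map, ← Matrix.map_mul,
      (Matrix.mem_orthogonalGroup_iff κ R).1 A.2, Matrix.map_one f f.map_zero f.map_one]⟩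
  map_one' := Subtype.ext (Matrix.map_one f f.map_zero f.map_one)
  map_mul' _ _ := Subtype.ext Matrix.map_mul

theorem trace_orthogonalGroupMap {κ R S : Type*} [Fintype κ] [DecidableEq κ] [CommRing R]
    [CommRing S] (f : R →+* S) (A : Matrix.orthogonalGroup κ R) :
    (orthogonalGroupMap κ f A : Matrix κ κ S).trace = f (A : Matrix κ κ R).trace :=
  (AddMonoidHom.map_trace f _).symm

theorem orthogonal_spin_network_eq_product_of_wilson_loops_general {G : Type*} [Group G] {d : ℕ}
    (β : Fin d → G) (τ : Equiv.Perm (Fin (2 * d))) (hinv : τ * τ = 1) (hfpf : ∀ x, τ x ≠ x) :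
    ∃ L : List G, ∀ (n : ℕ) (ρ : G →* Matrix.orthogonalGroup (Fin n) ℂ),
      LinearMap.trace ℂ _
          ((PiTensorProduct.map fun a => (ρ (β a) : Matrix (Fin n) (Fin n) ℂ).mulVecLin) ∘ₗ
            pairingMap n d τ) =
        (L.map fun w => (ρ w : Matrix (Fin n) (Fin n) ℂ).trace).prod := by
  have hinvolutive : Function.Involutive τ := Equiv.congr_fun hinv
  obtain ⟨L, hL⟩ := exists_sum_invariant_eq_prod_trace (R := ℂ) (halvesEquiv d) hinvolutive hfpf β
  refine ⟨L, fun n ρ => ?_⟩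
  rw [trace_map_comp_pairingMap hinvolutive]
  convert hL n ρ

/-- **Orthogonal spin networks with the invariants `J_τ` are products of Wilson loops.**
For any partition `τ` of `{1, …, 2p}` into pairs (`p = p₁ + ⋯ + p_r`) there are words
`w₁, …, w_c` in the free group on `r` generators such that for all `g₁, …, g_r ∈ O(n)`,
`tr((g₁^{⊗p₁} ⊗ ⋯ ⊗ g_r^{⊗p_r}) ∘ J_τ) = ∏ j, tr(w_j(g))`. -/
theorem orthogonal_spin_network_eq_product_of_wilson_loops
    (n r : ℕ) (hn : 1 ≤ n) (hr : 1 ≤ r) (p : Fin r → ℕ)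
    (τ : Equiv.Perm (Fin (2 * ∑ i, p i))) (hinv : τ * τ = 1) (hfpf : ∀ x, τ x ≠ x) :
    ∃ L : List (FreeGroup (Fin r)),
      ∀ g : Fin r → Matrix.orthogonalGroup (Fin n) ℝ,
        LinearMap.trace ℂ _
            ((PiTensorProduct.map fun a : Fin (∑ i, p i) =>
              Matrix.mulVecLin
                ((g (blockIndex p a) : Matrix (Fin n) (Fin n) ℝ).map
                  (Complex.ofReal : ℝ → ℂ))) ∘ₗ pairingMap n (∑ i, p i) τ)
          = (L.map fun w =>
              ((Matrix.trace
                ((FreeGroup.lift g w : Matrix.orthogonalGroup (Fin n) ℝ) :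
                  Matrix (Fin n) (Fin n) ℝ) : ℝ) : ℂ)).prod := by
  obtain ⟨L, hL⟩ := orthogonal_spin_network_eq_product_of_wilson_loops_general
    (fun a => FreeGroup.of (blockIndex p a)) τ hinv hfpf
  refine ⟨L, fun g => ?_⟩
  have htrace := hL n ((orthogonalGroupMap (Fin n) Complex.ofRealHom).comp (FreeGroup.lift g))
  simp only [MonoidHom.comp_apply, FreeGroup.lift_apply_of, trace_orthogonalGroupMap] at htrace
  exact htrace
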